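/- arXiv:math/0702776 — 2 statements merged into one kernel-verified Lean document; each statement's English description precedes it below -/
import Mathlib

section
/- Let α < β be real numbers, K a natural number, F a finite subset of ℝ with at most K elements, S a subset of ℝ, and ε > 0 with ε < (β − α)/(3(K+1)). Suppose every point x ∈ S ∩ (α, β) satisfies dist(x, F) ≤ ε. Then there exists an open interval (a, b) ⊆ (α, β) with b − a ≥ (β − α)/(3(K+1)) and (a, b) ∩ S = ∅. -/
open Set

/-- If the trace of `S` on `(α, β)` lies in an `ε`-neighborhood of a set `F` of at most `K`
points, and `ε < (β - α)/(3(K+1))`, then `S` omits an open subinterval of `(α, β)` of length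
at least `(β - α)/(3(K+1))`.  (The distance to `F` is the extended distance, `+∞` for `F = ∅`.) -/
theorem exists_gap_of_spectrum_near_finset
    (α β : ℝ) (hαβ : α < β) (K : ℕ) (F : Finset ℝ) (hF : F.card ≤ K)
    (S : Set ℝ) (ε : ℝ) (hε : 0 < ε) (hεsmall : ε < (β - α) / (3 * ((K : ℝ) + 1)))
    (hloc : ∀ x ∈ S ∩ Ioo α β, EMetric.infEdist x (F : Set ℝ) ≤ ENNReal.ofReal ε) :
    ∃ a b : ℝ, Ioo a b ⊆ Ioo α β ∧ (β - α) / (3 * ((K : ℝ) + 1)) ≤ b - a ∧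
      Ioo a b ∩ S = ∅ := by
  obtain ⟨d, hd⟩ : ∃ d, d = (β - α) / (3 * ((K : ℝ) + 1)) := ⟨_, rfl⟩
  rw [← hd] at hεsmall ⊢
  have hK : (0 : ℝ) < (K : ℝ) + 1 := by positivity
  have hd0 : 0 < d := hε.trans hεsmall
  have hL : β = α + 3 * ((K : ℝ) + 1) * d := by
    rw [hd]; field_simp; ring
  -- pigeonhole: one of the `K + 1` cells of length `3 d` contains no point of `F`
  have hcell : ∃ i : Fin (K + 1), ∀ y ∈ F,
      ¬ (α + 3 * (i : ℕ) * d ≤ y ∧ y < α + 3 * (i : ℕ) * d + 3 * d) := by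
    by_contra! h
    choose f hfF hf1 hf2 using h
    have key : ∀ i j : Fin (K + 1), f i = f j → ¬ i < j := by
      intro i j hij hlt
      have h1 : ((i : ℕ) : ℝ) + 1 ≤ ((j : ℕ) : ℝ) := by
        exact_mod_cast Nat.succ_le_of_lt (Fin.lt_def.mp hlt)
      have h2 := hf2 i
      have h3 := hf1 j
      rw [← hij] at h3
      nlinarith [mul_le_mul_of_nonneg_right h1 hd0.le]
    have hinj : Function.Injective f := by
      intro i j hij
      exact le_antisymm (not_lt.mp (key j i hij.symm)) (not_lt.mp (key i j hij))
    have hc : (Finset.univ : Finset (Fin (K + 1))).card ≤ F.card :=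
      Finset.card_le_card_of_injOn f (fun i _ => hfF i) hinj.injOn
    rw [Finset.card_univ, Fintype.card_fin] at hc
    omega
  obtain ⟨i, hi⟩ := hcell
  have hi0 : 0 ≤ ((i : ℕ) : ℝ) * d := by positivity
  have hiK : ((i : ℕ) : ℝ) * d ≤ K * d := by
    have : ((i : ℕ) : ℝ) ≤ K := by exact_mod_cast Nat.le_of_lt_succ i.isLt
    exact mul_le_mul_of_nonneg_right this hd0.le
  have hsub : Ioo (α + 3 * (i : ℕ) * d + d) (α + 3 * (i : ℕ) * d + 2 * d) ⊆ Ioo α β := by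
    intro x hx
    constructor
    · nlinarith [hx.1]
    · rw [hL]; nlinarith [hx.2]
  refine ⟨_, _, hsub, by linarith, ?_⟩
  rw [Set.eq_empty_iff_forall_notMem]
  rintro x ⟨hx, hxS⟩
  have h1 := (hloc x ⟨hxS, hsub hx⟩).trans_lt ((ENNReal.ofReal_lt_ofReal_iff hd0).mpr hεsmall)
  obtain ⟨y, hyF, hy⟩ := Metric.infEDist_lt_iff.mp h1
  rw [edist_dist, ENNReal.ofReal_lt_ofReal_iff hd0, Real.dist_eq, abs_lt] at hy
  exact hi y hyF ⟨by linarith [hx.1, hy.2], by linarith [hx.2, hy.1]⟩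
end

section
/- Let S and F be subsets of ℝ, let A < B be reals, I = [A, B], let K be a natural number, N ≥ 1 a natural number, and δ, ε, ε' > 0 with ε' ≤ δ/8, ε ≤ δ/8, and ε < δ/(24(K+1)). Assume: (i) every point x ∈ S ∩ I satisfies dist(x, F) ≤ ε and every point y ∈ F ∩ I satisfies dist(y, S) ≤ ε; (ii) F ∩ I has at most K elements; (iii) there are points μ₀ < μ₁ < … < μ_N in I with μⱼ − μⱼ₋₁ > δ for j = 1, …, N, μ₀ − A > δ and B − μ_N > δ; (iv) each μⱼ satisfies dist(μⱼ, F) ≤ ε'. Then there exist points s₀ < s₁ < … < s_N in S ∩ I and, for each j ∈ {1, …, N}, an open interval Jⱼ ⊆ (sⱼ₋₁, sⱼ) of length at least δ/(6(K+1)) with Jⱼ ∩ S = ∅; in particular, S has at least N distinct gaps of length ≥ δ/(6(K+1)) inside I. -/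
open Set

theorem pigeon_aux (T : Set ℝ) (hT : T.Finite) (K : ℕ) (hK : T.ncard ≤ K) (c h : ℝ) (hh : 0 < h) :
    ∃ i : ℕ, i ≤ K ∧ ∀ f ∈ T, c + i * h ≤ f → c + (i + 1) * h ≤ f := by
  by_contra hcon
  push Not at hcon
  choose! g hgT hg1 hg2 using hcon
  have hinj : Set.InjOn g (Finset.range (K + 1) : Set ℕ) := by
    have key : ∀ i k : ℕ, i ≤ K → k ≤ K → i < k → g i ≠ g k := by
      intro i k hi hk hik he
      have h1 := hg2 i hi
      have h2 := hg1 k hk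
      have h3 : ((i : ℝ) + 1) ≤ k := by exact_mod_cast hik
      have h4 := mul_le_mul_of_nonneg_right h3 hh.le
      linarith
    intro i hi k hk he
    have hi' : i ≤ K := by simpa [Nat.lt_succ_iff] using hi
    have hk' : k ≤ K := by simpa [Nat.lt_succ_iff] using hk
    rcases lt_trichotomy i k with h | h | h
    · exact absurd he (key i k hi' hk' h)
    · exact h
    · exact absurd he.symm (key k i hk' hi' h)
  have hc : (Finset.range (K + 1)).card ≤ hT.toFinset.card := by
    apply Finset.card_le_card_of_injOn g _ hinj
    intro i hi
    have hi' : i ≤ K := by simpa [Nat.lt_succ_iff] using hi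
    simpa using hgT i hi'
  rw [Finset.card_range, ← Set.ncard_eq_toFinset_card T hT] at hc
  omega

theorem near_aux (x : ℝ) (F : Set ℝ) (e r : ℝ) (hr : 0 < r) (her : e < r)
    (h : EMetric.infEdist x F ≤ ENNReal.ofReal e) : ∃ f ∈ F, x - r < f ∧ f < x + r := by
  have h1 : EMetric.infEdist x F < ENNReal.ofReal r :=
    lt_of_le_of_lt h ((ENNReal.ofReal_lt_ofReal_iff hr).2 her)
  obtain ⟨f, hf, hd⟩ := Metric.infEDist_lt_iff.1 h1
  rw [edist_dist, ENNReal.ofReal_lt_ofReal_iff hr, Real.dist_eq, abs_lt] at hd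
  exact ⟨f, hf, by linarith, by linarith⟩

/-- Abstract gap theorem: if the spectrum `S` of the full operator and the spectrum `F` of the
auxiliary (Dirichlet) operator are mutually `ε`-close on the interval `I = [A, B]`, `F ∩ I` has
at most `K` points, and there are `N + 1` approximate eigenvalues `μ₀ < μ₁ < ⋯ < μ_N`
(`ε'`-close to `F`) separated by more than `δ` from each other and from the endpoints of `I`,
then `S` has at least `N` gaps of length `≥ δ/(6(K+1))` inside `I`, separated by points of `S`. -/
theorem spectrum_has_gaps_of_approx_eigenvalues
    (S F : Set ℝ) (A B : ℝ) (hAB : A < B) (K N : ℕ) (hN : 1 ≤ N)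
    (δ ε ε' : ℝ) (hδ : 0 < δ) (hε : 0 < ε) (hε' : 0 < ε')
    (hε'δ : ε' ≤ δ / 8) (hεδ : ε ≤ δ / 8) (hεK : ε < δ / (24 * ((K : ℝ) + 1)))
    (hSF : ∀ x ∈ S ∩ Icc A B, EMetric.infEdist x F ≤ ENNReal.ofReal ε)
    (hFS : ∀ y ∈ F ∩ Icc A B, EMetric.infEdist y S ≤ ENNReal.ofReal ε)
    (hKfin : (F ∩ Icc A B).Finite) (hK : (F ∩ Icc A B).ncard ≤ K)
    (μ : ℕ → ℝ)
    (hμI : ∀ j ≤ N, μ j ∈ Icc A B)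
    (hμsep : ∀ j, 1 ≤ j → j ≤ N → μ j - μ (j - 1) > δ)
    (hμA : μ 0 - A > δ) (hμB : B - μ N > δ)
    (hμF : ∀ j ≤ N, EMetric.infEdist (μ j) F ≤ ENNReal.ofReal ε') :
    ∃ s : ℕ → ℝ,
      (∀ j ≤ N, s j ∈ S ∩ Icc A B) ∧
      (∀ j, j < N → s j < s (j + 1)) ∧
      (∀ j, 1 ≤ j → j ≤ N → ∃ a b : ℝ,
        Ioo a b ⊆ Ioo (s (j - 1)) (s j) ∧
        δ / (6 * ((K : ℝ) + 1)) ≤ b - a ∧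
        Ioo a b ∩ S = ∅) := by
  obtain ⟨r, hr⟩ : ∃ r, r = δ / (24 * ((K : ℝ) + 1)) := ⟨_, rfl⟩
  have hK1 : (0 : ℝ) < (K : ℝ) + 1 := by positivity
  have hr0 : 0 < r := by rw [hr]; positivity
  have hrd : δ = 24 * (((K : ℝ) + 1) * r) := by rw [hr]; field_simp
  have hKr : 0 ≤ (K : ℝ) * r := by positivity
  have hgap : δ / (6 * ((K : ℝ) + 1)) = 4 * r := by rw [hr]; field_simp; norm_num
  have hr24 : r ≤ δ / 24 := by linarith
  rw [← hr] at hεK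
  have hlo : ∀ j ≤ N, A + δ < μ j := by
    intro j
    induction j with
    | zero => intro _; linarith
    | succ k ih =>
      intro hk
      have h1 := ih (by omega)
      have h2 := hμsep (k + 1) (by omega) hk
      simp only [Nat.add_sub_cancel] at h2
      linarith
  have hhi : ∀ d j, j + d = N → μ j < B - δ := by
    intro d
    induction d with
    | zero => intro j hj; simp only [Nat.add_zero] at hj; subst hj; linarith
    | succ d ih =>
      intro j hj
      have h1 := ih (j + 1) (by omega)
      have h2 := hμsep (j + 1) (by omega) (by omega)
      simp only [Nat.add_sub_cancel] at h2
      linarith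
  have hs : ∀ j, j ≤ N → ∃ s ∈ S, μ j - 5 * δ / 24 < s ∧ s < μ j + 5 * δ / 24 := by
    intro j hj
    have hl := hlo j hj
    have hu := hhi (N - j) j (by omega)
    obtain ⟨f, hf, hf1, hf2⟩ := near_aux (μ j) F ε' (δ / 6) (by linarith) (by linarith) (hμF j hj)
    obtain ⟨s, hs, hs1, hs2⟩ := near_aux f S ε r hr0 hεK
      (hFS f ⟨hf, by linarith, by linarith⟩)
    exact ⟨s, hs, by linarith, by linarith⟩
  choose! s hsS hs1 hs2 using hs
  have hstep : ∀ j, j < N → s j + 7 * δ / 12 < s (j + 1) := by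
    intro j hj
    have h1 := hs2 j hj.le
    have h2 := hs1 (j + 1) hj
    have h3 := hμsep (j + 1) (by omega) hj
    simp only [Nat.add_sub_cancel] at h3
    linarith
  have hsI : ∀ j ≤ N, A + r < s j ∧ s j < B - r := by
    intro j hj
    have hl := hlo j hj
    have hu := hhi (N - j) j (by omega)
    have h1 := hs1 j hj
    have h2 := hs2 j hj
    constructor <;> linarith
  refine ⟨s, fun j hj => ⟨hsS j hj, ?_, ?_⟩, fun j hj => ?_, ?_⟩
  · linarith [(hsI j hj).1]
  · linarith [(hsI j hj).2]
  · linarith [hstep j hj]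
  · intro j hj1 hjN
    obtain ⟨k, rfl⟩ : ∃ k, j = k + 1 := ⟨j - 1, by omega⟩
    simp only [Nat.add_sub_cancel]
    obtain ⟨i, hi, hfree⟩ := pigeon_aux (F ∩ Icc A B) hKfin K hK (s k) (14 * r) (by linarith)
    have hst := hstep k (by omega)
    have hik : (i : ℝ) ≤ K := by exact_mod_cast hi
    have hir := mul_le_mul_of_nonneg_right hik hr0.le
    have hi0 : 0 ≤ (i : ℝ) * r := by positivity
    have hA := (hsI k (by omega)).1
    have hB := (hsI (k + 1) hjN).2
    refine ⟨s k + i * (14 * r) + r, s k + (i + 1) * (14 * r) - r, ?_, ?_, ?_⟩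
    · rintro x ⟨hx1, hx2⟩
      constructor <;> linarith
    · rw [hgap]; linarith
    · rw [Set.eq_empty_iff_forall_notMem]
      rintro x ⟨⟨hx1, hx2⟩, hxS⟩
      obtain ⟨f, hf, hf1, hf2⟩ := near_aux x F ε r hr0 hεK
        (hSF x ⟨hxS, by linarith, by linarith⟩)
      have := hfree f ⟨hf, by linarith, by linarith⟩ (by linarith)
      linarith
end
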